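/- With high probability, the set Len_{3⌊n^{1/3}⌋} of chords of D_n of length at least 3⌊n^{1/3}⌋ is strongly connected as a subdiagram of the random oriented chord diagram D_n: for any two chords c, d of length at least 3⌊n^{1/3}⌋ there is a directed path from c to d in the directed intersection graph of D_n using only chords of length at least 3⌊n^{1/3}⌋. -/

import Mathlib

open scoped Classical
open Finset Filter

/-- A chord diagram of size `n`: a fixed-point-free involution of the `2n`
endpoints `0, 1, …, 2n-1` (endpoint `i` here corresponds to the label `i+1`). -/
abbrev ChordDiagram (n : ℕ) :=
  {f : Fin (2*n) → Fin (2*n) // (∀ i, f (f i) = i) ∧ ∀ i, f i ≠ i}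

/-- `c` lies strictly between `a` and `b`. -/
def Between {m : ℕ} (a b c : Fin m) : Prop := min a b < c ∧ c < max a b

/-- The chord of `C` containing endpoint `x` crosses the chord containing endpoint `u`:
exactly one of the two endpoints `u`, `C u` lies strictly between `x` and `C x`. -/
def Crosses {n : ℕ} (C : ChordDiagram n) (x u : Fin (2*n)) : Prop :=
  Xor' (Between x (C.1 x) u) (Between x (C.1 x) (C.1 u))

/-- Uniform probability of an event over all chord diagrams of size `n`. -/
noncomputable def prob (n : ℕ) (E : ChordDiagram n → Prop) : ℝ :=
  ((Finset.univ.filter E).card : ℝ) / ((Finset.univ : Finset (ChordDiagram n)).card : ℝ)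

/-- The degree of the chord of `C` containing endpoint `x`: the number of chords
crossing it (each chord counted once via its smaller endpoint). -/
noncomputable def chordDegree {n : ℕ} (C : ChordDiagram n) (x : Fin (2*n)) : ℕ :=
  (Finset.univ.filter fun u => u < C.1 u ∧ Crosses C x u).card

/-- The length of the chord of `C` containing endpoint `x`: the number of endpoints
on the smaller of the two arcs it determines. -/
def chordLength {n : ℕ} (C : ChordDiagram n) (x : Fin (2*n)) : ℕ :=
  min (max (x:ℕ) (C.1 x : ℕ) - min (x:ℕ) (C.1 x : ℕ) - 1)
      (2*n - (max (x:ℕ) (C.1 x : ℕ) - min (x:ℕ) (C.1 x : ℕ)) - 1)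

/-- Degree of the chord containing endpoint `1` (index `0`). -/
noncomputable def degreeC1 (n : ℕ) (C : ChordDiagram n) : ℕ :=
  if h : 0 < n then chordDegree C ⟨0, by omega⟩ else 0

/-- Length of the chord containing endpoint `1` (index `0`). -/
noncomputable def lengthC1 (n : ℕ) (C : ChordDiagram n) : ℕ :=
  if h : 0 < n then chordLength C ⟨0, by omega⟩ else 0

/-- Membership in the component (w.r.t. the crossing relation) of the chord
containing the root endpoint. -/
def InRootComponent {n : ℕ} (C : ChordDiagram n) (root x : Fin (2*n)) : Prop :=
  x = root ∨ x = C.1 root ∨ Relation.ReflTransGen (fun a b => Crosses C a b) root x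

/-- The chord containing `x` is simple: it joins two (cyclically) consecutive endpoints. -/
def IsSimple {n : ℕ} (C : ChordDiagram n) (x : Fin (2*n)) : Prop :=
  (C.1 x : ℕ) = ((x : ℕ) + 1) % (2*n) ∨ (x : ℕ) = ((C.1 x : ℕ) + 1) % (2*n)

/-- `C` is monolithic (with respect to `root`): every chord not in the root
component is simple, and no two simple chords are next to each other. -/
def Monolithic {n : ℕ} (C : ChordDiagram n) (root : Fin (2*n)) : Prop :=
  (∀ x : Fin (2*n), ¬ InRootComponent C root x → IsSimple C x) ∧
  ¬ ∃ i : Fin (2*n), (C.1 i : ℕ) = ((i : ℕ) + 1) % (2*n) ∧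
      ∃ j : Fin (2*n), (j : ℕ) = ((i : ℕ) + 2) % (2*n) ∧ (C.1 j : ℕ) = ((i : ℕ) + 3) % (2*n)

/-- `L_j`: the number of chords of length `j` in `C`. -/
noncomputable def lengthCount (n : ℕ) (j : ℕ) (C : ChordDiagram n) : ℕ :=
  (Finset.univ.filter fun x : Fin (2*n) => x < C.1 x ∧ chordLength C x = j).card

/-- The endpoints of chords of `C` of length at least `k`. -/
noncomputable def lenAtLeast (n k : ℕ) (C : ChordDiagram n) : Finset (Fin (2*n)) :=
  Finset.univ.filter fun x => k ≤ chordLength C x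

/-- The number of chords with endpoints in `S` crossing the chord containing `x`. -/
noncomputable def degreeIn {n : ℕ} (C : ChordDiagram n) (S : Finset (Fin (2*n)))
    (x : Fin (2*n)) : ℕ :=
  (S.filter fun u => u < C.1 u ∧ Crosses C x u).card

/-- `S` (a chord-closed set of endpoints) is a set of chords each crossing at
least `k` other chords of `S`. -/
def IsCore {n : ℕ} (C : ChordDiagram n) (k : ℕ) (S : Finset (Fin (2*n))) : Prop :=
  (∀ x ∈ S, C.1 x ∈ S) ∧ ∀ x ∈ S, k ≤ degreeIn C S x

/-- The `k`-core: the union of all sets of chords in which every chord crosses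
at least `k` other chords of the set. -/
noncomputable def kCore (n k : ℕ) (C : ChordDiagram n) : Finset (Fin (2*n)) :=
  Finset.univ.filter fun x => ∃ S : Finset (Fin (2*n)), IsCore C k S ∧ x ∈ S

/-- The number of chords in the `k`-core of `C`. -/
noncomputable def kCoreSize (n k : ℕ) (C : ChordDiagram n) : ℕ :=
  ((kCore n k C).filter fun x => x < C.1 x).card

/-- `Z_k`: the number of chords of length strictly less than `k`. -/
noncomputable def shortCount (n k : ℕ) (C : ChordDiagram n) : ℕ :=
  (Finset.univ.filter fun x : Fin (2*n) => x < C.1 x ∧ chordLength C x < k).card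

/-- `C` contains a balanced clique of size `m`: a set of `m` pairwise crossing
chords with exactly one endpoint in each of the `2m` blocks of length `⌊n/m⌋`. -/
def HasBalancedClique (n m : ℕ) (C : ChordDiagram n) : Prop :=
  ∃ S : Finset (Fin (2*n)),
    (∀ x ∈ S, C.1 x ∈ S) ∧
    (∀ x ∈ S, ∀ u ∈ S, u ≠ x → u ≠ C.1 x → Crosses C x u) ∧
    (∀ t : ℕ, 1 ≤ t → t ≤ 2*m →
      (S.filter fun x => (t-1) * (n/m) ≤ (x:ℕ) ∧ (x:ℕ) < t * (n/m)).card = 1)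

/-- An oriented chord diagram: a chord diagram together with auxiliary fair-coin
bits; the bit attached to a crossing pair of chords (indexed by their smaller
endpoints) decides which chord over-crosses the other. -/
abbrev OrientedChordDiagram (n : ℕ) := ChordDiagram n × (Fin (2*n) → Fin (2*n) → Bool)

/-- The smaller endpoint of the chord of `C` containing `x`. -/
def chordRep {n : ℕ} (C : ChordDiagram n) (x : Fin (2*n)) : Fin (2*n) := min x (C.1 x)

/-- In the oriented diagram `D`, the chord containing `x` crosses and
over-crosses the chord containing `u`. -/
def OverD {n : ℕ} (D : OrientedChordDiagram n) (x u : Fin (2*n)) : Prop :=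
  Crosses D.1 x u ∧
    ((chordRep D.1 x ≤ chordRep D.1 u ∧ D.2 (chordRep D.1 x) (chordRep D.1 u) = true) ∨
     (chordRep D.1 u < chordRep D.1 x ∧ D.2 (chordRep D.1 u) (chordRep D.1 x) = false))

/-- Uniform probability of an event over all oriented chord diagrams of size `n`
(this yields a uniformly random diagram with each crossing oriented by an
independent fair coin). -/
noncomputable def probD (n : ℕ) (E : OrientedChordDiagram n → Prop) : ℝ :=
  ((Finset.univ.filter E).card : ℝ) /
    ((Finset.univ : Finset (OrientedChordDiagram n)).card : ℝ)

/-- The chords (given by their endpoints in `S`) are strongly connected in the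
directed intersection graph of `D`, using only chords of `S`. -/
def StronglyConnectedIn {n : ℕ} (D : OrientedChordDiagram n) (S : Set (Fin (2*n))) : Prop :=
  ∀ c ∈ S, ∀ d ∈ S,
    Relation.ReflTransGen (fun a b => a ∈ S ∧ b ∈ S ∧ OverD D a b) c d

/-- The number of chords with both endpoints in the cyclic block
`{i, i+1, …, i+t-1}` (mod `2n`). -/
noncomputable def chordsInBlock (n : ℕ) (C : ChordDiagram n) (i t : ℕ) : ℕ :=
  (Finset.univ.filter fun x : Fin (2*n) => x < C.1 x ∧
    (∃ a < t, (x:ℕ) = (i + a) % (2*n)) ∧ (∃ a < t, ((C.1 x : ℕ)) = (i + a) % (2*n))).card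

/-- The chord of `x` reaches the chord of `u` in the directed intersection graph
(of the whole diagram); endpoints of the same chord represent the same vertex. -/
def ReachChord {n : ℕ} (D : OrientedChordDiagram n) (x u : Fin (2*n)) : Prop :=
  u = x ∨ u = D.1.1 x ∨ Relation.ReflTransGen (fun a b => OverD D a b) x u

/-- The chords of `x` and `u` lie in the same strong component. -/
def MutualReach {n : ℕ} (D : OrientedChordDiagram n) (x u : Fin (2*n)) : Prop :=
  ReachChord D x u ∧ ReachChord D u x

/-- The number of single-chord strong components of `D`. -/
noncomputable def singleCount (n : ℕ) (D : OrientedChordDiagram n) : ℕ :=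
  (Finset.univ.filter fun x : Fin (2*n) =>
    x < D.1.1 x ∧ ∀ u : Fin (2*n), u ≠ x → u ≠ D.1.1 x → ¬ MutualReach D x u).card

/-!
Reveal the random matching point by point. If `X` and `Y` are disjoint blocks with about `k / 2`
and `n / 100` points, each newly revealed point of `X` has its partner in `Y` with probability
bounded below, whatever was revealed before. Given two chords `a` and `b`, the coins make a fixed
chord joining `X` to `Y` lose against `a` and win against `b` with probability at least `1 / 4`,
independently for different joining chords. So no joining chord does so with probability at most
`q ^ (k / 4)` for some fixed `q < 1`, and a union bound over the `O(n ^ 4)` choices of `a`, `b`,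
`X` and `Y` costs nothing as soon as `log n = o(k)`. Since the coins are independent of the
matching, `a` and `b` may range over all points of the circle here, whether or not they turn out
to be smaller endpoints of chords.

It remains to choose the blocks. For a chord of length at least `k`, some pair of blocks forces
every joining chord to cross it and to have length linear in `n`. For two chords of such linear
length, some pair of blocks forces every joining chord to cross both and to have length at least
`k`. Hence any two chords `c` and `d` of length at least `k` are connected by a path
`c → a → x → b → d` in which `a` and `b` have length linear in `n`.
-/

section Matchings

variable {α : Type*} [DecidableEq α] {V X Y : Finset α} {f : α → α} {x y : α}

lemma involutive_comp_swap (hf : Function.Involutive f)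
    (h : ∀ z, f (Equiv.swap x y z) = Equiv.swap x y (f z)) :
    Function.Involutive (f ∘ Equiv.swap x y) := fun z => by
  simp only [Function.comp_apply, ← h, Equiv.swap_apply_self, hf z]

lemma card_sdiff_pair {N : ℕ} (hV : #V = 2 * (N + 1)) (hx : x ∈ V) (hy : y ∈ V.erase x) :
    #(V \ {x, y}) = 2 * N := by
  obtain ⟨hyx, hyV⟩ := mem_erase.1 hy
  rw [card_sdiff_of_subset (by simp [insert_subset_iff, hx, hyV]), card_pair hyx.symm]
  omega

lemma erase_subset_sdiff_pair (hY : Y ⊆ V.erase x) (y : α) : Y.erase y ⊆ V \ {x, y} := by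
  rw [sdiff_insert, sdiff_singleton_eq_erase, ← erase_right_comm]
  exact erase_subset_erase _ hY

lemma card_filter_comp_swap_ge (hx : x ∈ X) {g : α → α} (hgy : g y = y) :
    (if y ∈ Y then 1 else 0) + #{z ∈ X \ {x, y} | g z ∈ Y.erase y} ≤
      #{z ∈ X | (g ∘ Equiv.swap x y) z ∈ Y} := by
  have hsub : ({z ∈ X \ {x, y} | g z ∈ Y.erase y} : Finset α) ⊆
      {z ∈ X | (g ∘ Equiv.swap x y) z ∈ Y}.erase x := by
    intro z hz
    simp only [mem_filter, Finset.mem_sdiff, mem_insert, mem_singleton, not_or, mem_erase] at hz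
    obtain ⟨⟨hzX, hzx, hzy⟩, -, hgz⟩ := hz
    simp [hzX, hzx, Equiv.swap_apply_of_ne_of_ne hzx hzy, hgz]
  have hcard := card_le_card hsub
  split_ifs with hy
  · have hmem : x ∈ ({z ∈ X | (g ∘ Equiv.swap x y) z ∈ Y} : Finset α) := by simp [hx, hgy, hy]
    rw [card_erase_of_mem hmem] at hcard
    have := card_pos.2 ⟨x, hmem⟩
    omega
  · rw [zero_add]
    exact hcard.trans (card_le_card (erase_subset _ _))

lemma sum_pow_card_filter_comp_swap_le {r : ℝ} (hr₀ : 0 ≤ r) (hr₁ : r ≤ 1) (hx : x ∈ X)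
    {F : Finset (α → α)} (hF : ∀ g ∈ F, g y = y) :
    ∑ g ∈ F, r ^ #{z ∈ X | (g ∘ Equiv.swap x y) z ∈ Y} ≤
      (if y ∈ Y then r else 1) * ∑ g ∈ F, r ^ #{z ∈ X \ {x, y} | g z ∈ Y.erase y} := by
  rw [mul_sum]
  refine sum_le_sum fun g hg => ?_
  refine (pow_le_pow_of_le_one hr₀ hr₁ (card_filter_comp_swap_ge hx (hF g hg))).trans_eq ?_
  rw [pow_add]
  split_ifs <;> simp

lemma sum_ite_mem_erase_le (hx : x ∈ V) (hYV : Y ⊆ V.erase x) {N : ℕ} (hV : #V = 2 * (N + 1))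
    {r δ : ℝ} (hδ : 0 ≤ δ) (hr : r ≤ 1) (hY : δ * (2 * (N + 1)) ≤ #Y) :
    ∑ y ∈ V.erase x, (if y ∈ Y then r else 1) ≤ (2 * N + 1) * (1 - δ * (1 - r)) := by
  have hcard : (#(V.erase x) : ℝ) = 2 * N + 1 := by
    rw [card_erase_of_mem hx, hV]
    push_cast [show 2 * (N + 1) - 1 = 2 * N + 1 by omega]
    ring
  have h_eq : ∑ y ∈ V.erase x, (if y ∈ Y then r else 1) = (2 * N + 1) - (1 - r) * #Y := by
    calc ∑ y ∈ V.erase x, (if y ∈ Y then r else 1)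
        = ∑ y ∈ V.erase x, (1 - if y ∈ Y then 1 - r else 0) := by
          refine sum_congr rfl fun y _ => ?_
          split_ifs <;> ring
      _ = (2 * N + 1) - (1 - r) * #Y := by
          rw [sum_sub_distrib, sum_ite_mem, inter_eq_right.2 hYV]
          simp [hcard]
          ring
  rw [h_eq]
  nlinarith [mul_nonneg hδ (sub_nonneg.2 hr), mul_nonneg (sub_nonneg.2 hr) (sub_nonneg.2 hY)]

variable [Fintype α]

/-- The perfect matchings of a finite set `V`. A matching is encoded as the involution of the
ambient type that exchanges matched points and fixes every point outside `V`. -/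
noncomputable def matchings (V : Finset α) : Finset (α → α) :=
  {f | Function.Involutive f ∧ ∀ i, f i ≠ i ↔ i ∈ V}

lemma mem_matchings : f ∈ matchings V ↔ Function.Involutive f ∧ ∀ i, f i ≠ i ↔ i ∈ V := by
  simp [matchings]

lemma apply_mem_erase_of_mem_matchings (hf : f ∈ matchings V) (hx : x ∈ V) :
    f x ∈ V.erase x := by
  obtain ⟨hinv, hsupp⟩ := mem_matchings.1 hf
  have hfx : f x ≠ x := (hsupp x).2 hx
  exact mem_erase.2 ⟨hfx, (hsupp (f x)).1 (by rw [hinv]; exact hfx.symm)⟩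

lemma comp_swap_mem_matchings_sdiff (hf : f ∈ matchings V) (hxy : f x = y) :
    f ∘ Equiv.swap x y ∈ matchings (V \ {x, y}) := by
  obtain ⟨hinv, hsupp⟩ := mem_matchings.1 hf
  have hyx : f y = x := by rw [← hxy, hinv]
  refine mem_matchings.2 ⟨involutive_comp_swap hinv fun z => ?_, fun i => ?_⟩
  · rw [← hinv.injective.swap_apply, hxy, hyx, Equiv.swap_comm]
  · rcases eq_or_ne i x with rfl | hix
    · simp [hyx]
    rcases eq_or_ne i y with rfl | hiy
    · simp [hxy]
    simp [Equiv.swap_apply_of_ne_of_ne hix hiy, hix, hiy, ← hsupp]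

lemma comp_swap_mem_matchings (hx : x ∈ V) (hy : y ∈ V) (hne : x ≠ y)
    (hf : f ∈ matchings (V \ {x, y})) : f ∘ Equiv.swap x y ∈ matchings V := by
  obtain ⟨hinv, hsupp⟩ := mem_matchings.1 hf
  have hfx : f x = x := by simpa using (hsupp x).not
  have hfy : f y = y := by simpa using (hsupp y).not
  refine mem_matchings.2 ⟨involutive_comp_swap hinv fun z => ?_, fun i => ?_⟩
  · rw [← hinv.injective.swap_apply, hfx, hfy]
  · rcases eq_or_ne i x with rfl | hix
    · simp [hfy, hne.symm, hx]
    rcases eq_or_ne i y with rfl | hiy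
    · simp [hfx, hne, hy]
    simp [Equiv.swap_apply_of_ne_of_ne hix hiy, hsupp, hix, hiy]

lemma sum_matchings_eq_sum_erase {M : Type*} [AddCommMonoid M] (hx : x ∈ V)
    (φ : (α → α) → M) :
    ∑ f ∈ matchings V, φ f =
      ∑ y ∈ V.erase x, ∑ f ∈ matchings (V \ {x, y}), φ (f ∘ Equiv.swap x y) := by
  rw [← sum_fiberwise_of_maps_to fun f hf => apply_mem_erase_of_mem_matchings hf hx]
  refine sum_congr rfl fun y hy => ?_
  obtain ⟨hyx, hyV⟩ := mem_erase.1 hy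
  have hswap (f : α → α) : (f ∘ Equiv.swap x y) ∘ Equiv.swap x y = f := by
    ext z
    simp
  refine sum_nbij' (· ∘ Equiv.swap x y) (· ∘ Equiv.swap x y) (fun f hf => ?_) (fun f hf => ?_)
    (fun f _ => hswap f) (fun f _ => hswap f) (fun f _ => by rw [hswap])
  · exact comp_swap_mem_matchings_sdiff (mem_filter.1 hf).1 (mem_filter.1 hf).2
  · have hfy : f y = y := by simpa using ((mem_matchings.1 hf).2 y).not
    exact mem_filter.2 ⟨comp_swap_mem_matchings hx hyV hyx.symm hf, by simp [hfy]⟩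

lemma card_matchings {N : ℕ} (hV : #V = 2 * N) :
    #(matchings V) = Nat.doubleFactorial (2 * N - 1) := by
  induction N generalizing V with
  | zero =>
    have h_eq : matchings (∅ : Finset α) = {id} := by
      ext f
      simp only [mem_matchings, notMem_empty, iff_false, not_not, mem_singleton]
      exact ⟨fun h => funext h.2, by rintro rfl; exact ⟨fun _ => rfl, fun _ => rfl⟩⟩
    simp [card_eq_zero.1 hV, h_eq]
  | succ N ih =>
    obtain ⟨x, hx⟩ : V.Nonempty := card_pos.1 (by omega)
    calc #(matchings V) = ∑ y ∈ V.erase x, #(matchings (V \ {x, y})) := by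
          simp only [card_eq_sum_ones, sum_matchings_eq_sum_erase hx]
      _ = ∑ y ∈ V.erase x, Nat.doubleFactorial (2 * N - 1) :=
          sum_congr rfl fun y hy => ih (card_sdiff_pair hV hx hy)
      _ = Nat.doubleFactorial (2 * (N + 1) - 1) := by
          rw [sum_const, card_erase_of_mem hx, hV, smul_eq_mul,
            show 2 * (N + 1) - 1 = 2 * N + 1 by omega, Nat.doubleFactorial_add_one]

lemma sum_matchings_pow_card_le_of_forall {r δ B : ℝ} (hr₀ : 0 ≤ r) (hr₁ : r ≤ 1) (hδ : 0 ≤ δ)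
    {N : ℕ} (hV : #V = 2 * (N + 1)) (hXV : X ⊆ V) (hx : x ∈ X) (hYV : Y ⊆ V.erase x)
    (hY : δ * (2 * (N + 1)) ≤ #Y) (hB₀ : 0 ≤ B)
    (hB : ∀ y ∈ V.erase x,
      ∑ f ∈ matchings (V \ {x, y}), r ^ #{z ∈ X \ {x, y} | f z ∈ Y.erase y} ≤ B) :
    ∑ f ∈ matchings V, r ^ #{z ∈ X | f z ∈ Y} ≤ (2 * N + 1) * (1 - δ * (1 - r)) * B := by
  have hfix (y : α) : ∀ f ∈ matchings (V \ {x, y}), f y = y := fun f hf => by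
    simpa using ((mem_matchings.1 hf).2 y).not
  calc ∑ f ∈ matchings V, r ^ #{z ∈ X | f z ∈ Y}
      ≤ ∑ y ∈ V.erase x, (if y ∈ Y then r else 1) * B := by
        rw [sum_matchings_eq_sum_erase (hXV hx)]
        refine sum_le_sum fun y hy => ?_
        refine (sum_pow_card_filter_comp_swap_le hr₀ hr₁ hx (hfix y)).trans ?_
        gcongr
        exact hB y hy
    _ ≤ (2 * N + 1) * (1 - δ * (1 - r)) * B := by
        rw [← sum_mul]
        gcongr
        exact sum_ite_mem_erase_le (hXV hx) hYV hV hδ hr₁ hY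

-- Expose the partners of points of `X` one at a time: each time at least a fraction `δ` of the
-- possible partners lies in the unused part of `Y`, and an exposure uses up at most two points of
-- `X` and one point of `Y`.
lemma sum_matchings_pow_card_le {r δ : ℝ} (hr₀ : 0 ≤ r) (hr₁ : r ≤ 1) (hδ : 0 ≤ δ) (t : ℕ)
    {N : ℕ} (hV : #V = 2 * N) (hXV : X ⊆ V) (hYV : Y ⊆ V) (hXY : Disjoint X Y)
    (hX : 2 * t ≤ #X) (hY : δ * (2 * N) + t ≤ #Y) :
    ∑ f ∈ matchings V, r ^ #{z ∈ X | f z ∈ Y} ≤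
      (1 - δ * (1 - r)) ^ t * Nat.doubleFactorial (2 * N - 1) := by
  induction t generalizing V X Y N with
  | zero =>
    rw [pow_zero, one_mul, ← card_matchings hV, card_eq_sum_ones, Nat.cast_sum]
    exact sum_le_sum fun f _ => by simpa using pow_le_one₀ hr₀ hr₁
  | succ t ih =>
    obtain ⟨x, hx⟩ : X.Nonempty := card_pos.1 (by omega)
    obtain ⟨N, rfl⟩ : ∃ M, N = M + 1 :=
      Nat.exists_eq_succ_of_ne_zero fun h => by have := card_le_card hXV; omega
    have hYVx : Y ⊆ V.erase x := subset_erase.2 ⟨hYV, disjoint_left.1 hXY hx⟩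
    push_cast at hY
    have hq : 0 ≤ 1 - δ * (1 - r) := by
      have hYcard : (#Y : ℝ) ≤ 2 * (N + 1) := by exact_mod_cast hV ▸ card_le_card hYV
      have hδ₁ : δ ≤ 1 := by nlinarith
      exact sub_nonneg.2 (mul_le_one₀ hδ₁ (sub_nonneg.2 hr₁) (sub_le_self _ hr₀))
    refine (sum_matchings_pow_card_le_of_forall hr₀ hr₁ hδ hV hXV hx hYVx (by linarith)
      (B := (1 - δ * (1 - r)) ^ t * Nat.doubleFactorial (2 * N - 1)) (by positivity)
      fun y hy => ?_).trans_eq ?_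
    · have hYle : (#Y : ℝ) ≤ #(Y.erase y) + 1 := by
        exact_mod_cast Nat.sub_le_iff_le_add.1 pred_card_le_card_erase
      have hXle : #X ≤ #(X \ {x, y}) + 2 :=
        (Nat.sub_le_iff_le_add.1 (le_card_sdiff _ _)).trans (by gcongr; exact card_le_two)
      exact ih (card_sdiff_pair hV (hXV hx) hy) (sdiff_subset_sdiff hXV subset_rfl)
        (erase_subset_sdiff_pair hYVx y) (hXY.mono sdiff_subset (erase_subset _ _))
        (by omega) (by linarith)
    · rw [show 2 * (N + 1) - 1 = 2 * N + 1 by omega, Nat.doubleFactorial_add_one]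
      push_cast
      ring

end Matchings

section Tournaments

variable {ι κ α : Type*} [DecidableEq ι]

lemma card_filter_piecewise_eq_le [Fintype ι] (T : Finset ι) (τ ω₀ : ι → Bool) :
    #{ω : ι → Bool | T.piecewise τ ω = ω₀} ≤ 2 ^ #T := by
  calc #{ω : ι → Bool | T.piecewise τ ω = ω₀} ≤ #(univ : Finset (T → Bool)) := by
        refine card_le_card_of_injOn (fun ω i => ω i) (fun _ _ => by simp) ?_
        intro ω hω ω' hω' h_eq
        simp only [coe_filter, mem_univ, true_and, Set.mem_ofPred_eq] at hω hω'
        funext i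
        by_cases hi : i ∈ T
        · exact congrFun h_eq ⟨i, hi⟩
        · simpa [hi] using congrFun (hω.trans hω'.symm) i
    _ = 2 ^ #T := by simp

lemma card_filter_exists_ne_le [Finite ι] {G : Finset (ι → Bool)} {T : Finset ι} {τ : ι → Bool}
    (hG : ∀ ω ∈ G, T.piecewise τ ω ∈ G) :
    (#{ω ∈ G | ∃ i ∈ T, ω i ≠ τ i} : ℝ) ≤ (1 - (1 / 2) ^ #T) * #G := by
  have := Fintype.ofFinite ι
  have hfibre : #G ≤ 2 ^ #T * #{ω ∈ G | ¬ ∃ i ∈ T, ω i ≠ τ i} := by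
    refine card_le_mul_card_image_of_maps_to (f := fun ω => T.piecewise τ ω)
      (fun ω hω => ?_) _ fun ω₀ _ => (card_le_card ?_).trans (card_filter_piecewise_eq_le T τ ω₀)
    · exact mem_filter.2 ⟨hG ω hω, by simp +contextual⟩
    · exact filter_subset_filter _ (subset_univ G)
  have hsplit := card_filter_add_card_filter_not (s := G) fun ω => ∃ i ∈ T, ω i ≠ τ i
  have hfibre' : (1 / 2 : ℝ) ^ #T * #G ≤ #{ω ∈ G | ¬ ∃ i ∈ T, ω i ≠ τ i} := by
    rw [one_div, inv_pow, inv_mul_le_iff₀ (by positivity)]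
    exact_mod_cast hfibre
  rw [← hsplit] at hfibre' ⊢
  push_cast at hfibre' ⊢
  linarith

lemma card_filter_forall_exists_ne_le [Fintype ι] {d : ℕ} (T : κ → Finset ι) (τ : κ → ι → Bool)
    (H : Finset κ) (hT : (H : Set κ).PairwiseDisjoint T) (hd : ∀ h ∈ H, #(T h) ≤ d) :
    (#{ω : ι → Bool | ∀ h ∈ H, ∃ i ∈ T h, ω i ≠ τ h i} : ℝ) ≤
      (1 - (1 / 2) ^ d) ^ #H * Fintype.card (ι → Bool) := by
  have hq : (0 : ℝ) ≤ 1 - (1 / 2) ^ d := sub_nonneg.2 (pow_le_one₀ (by norm_num) (by norm_num))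
  induction H using Finset.induction_on with
  | empty => simp
  | insert a H ha ih =>
    rw [coe_insert, Set.pairwiseDisjoint_insert_of_notMem (by simpa using ha)] at hT
    simp only [forall_mem_insert] at hd
    set G : Finset (ι → Bool) := {ω | ∀ h ∈ H, ∃ i ∈ T h, ω i ≠ τ h i} with hG_def
    have hG : ∀ ω ∈ G, (T a).piecewise (τ a) ω ∈ G := by
      simp only [hG_def, mem_filter, mem_univ, true_and]
      intro ω hω h hh
      obtain ⟨i, hi, hne⟩ := hω h hh
      have hia : i ∉ T a := disjoint_right.1 (hT.2 h hh) hi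
      exact ⟨i, hi, by simpa [hia] using hne⟩
    calc (#{ω : ι → Bool | ∀ h ∈ insert a H, ∃ i ∈ T h, ω i ≠ τ h i} : ℝ)
        = #{ω ∈ G | ∃ i ∈ T a, ω i ≠ τ a i} := by
          simp only [hG_def, filter_filter, forall_mem_insert, and_comm]
      _ ≤ (1 - (1 / 2) ^ #(T a)) * #G := card_filter_exists_ne_le hG
      _ ≤ (1 - (1 / 2) ^ d) * ((1 - (1 / 2) ^ d) ^ #H * Fintype.card (ι → Bool)) := by
          gcongr ?_ * ?_
          · gcongr ?_ - ?_
            exact pow_le_pow_of_le_one (by norm_num) (by norm_num) hd.1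
          · exact ih hT.1 hd.2
      _ = (1 - (1 / 2) ^ d) ^ #(insert a H) * Fintype.card (ι → Bool) := by
          rw [card_insert_of_notMem ha]
          ring

variable [LinearOrder α]

/-- `Beats ω x y` says that `x` beats `y` in the tournament given by the coin flips `ω`. The pair
`{x, y}` is decided by the single coin indexed by `(min x y, max x y)`, which comes up `true` when
the smaller element wins; the other coins are never looked at. -/
def Beats (ω : α → α → Bool) (x y : α) : Prop :=
  (x ≤ y ∧ ω x y = true) ∨ (y < x ∧ ω y x = false)

lemma beats_iff {ω : α → α → Bool} {x y : α} :
    Beats ω x y ↔ ω (min x y) (max x y) = decide (x ≤ y) := by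
  rcases le_or_gt x y with h | h
  · simp [Beats, h, h.not_gt]
  · simp [Beats, h, h.le, h.not_ge]

lemma eq_of_min_eq_of_max_eq {H : Finset α} {a b g h : α} (ha : a ∉ H) (hb : b ∉ H) (hg : g ∈ H)
    (hh : h ∈ H) (hmin : min a g = min b h) (hmax : max a g = max b h) : g = h := by
  grind

lemma exists_beats_and_beats_iff {A B : Finset α} {h : α} (hAB : Disjoint A B)
    (hh : h ∉ A ∪ B) :
    ∃ τ : α × α → Bool, ∀ ω : α → α → Bool,
      ((∀ a ∈ A, Beats ω a h) ∧ ∀ b ∈ B, Beats ω h b) ↔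
        ∀ p ∈ (A ∪ B).image fun a => (min a h, max a h), Function.uncurry ω p = τ p := by
  refine ⟨fun p => if p.2 = h then decide (p.1 ∈ A) else decide (p.2 ∉ A), fun ω => ?_⟩
  rw [mem_union, not_or] at hh
  simp only [forall_mem_image, forall_mem_union, Function.uncurry_apply_pair]
  refine and_congr (forall₂_congr fun a ha => ?_) (forall₂_congr fun b hb => ?_)
  · rw [beats_iff]
    rcases (ne_of_mem_of_not_mem ha hh.1).lt_or_gt with h_lt | h_lt <;>
      simp [h_lt.le, h_lt.not_ge, h_lt.ne', ha]
  · rw [beats_iff, min_comm, max_comm]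
    have hbA : b ∉ A := disjoint_right.1 hAB hb
    rcases (ne_of_mem_of_not_mem hb hh.2).lt_or_gt with h_lt | h_lt <;>
      simp [h_lt.le, h_lt.not_ge, h_lt.ne', hbA]

lemma card_filter_forall_not_beats_le [Fintype α] {A B H : Finset α} (hAB : Disjoint A B)
    (hH : Disjoint (A ∪ B) H) :
    (#{ω : α → α → Bool | ∀ h ∈ H, ¬ ((∀ a ∈ A, Beats ω a h) ∧ ∀ b ∈ B, Beats ω h b)} : ℝ) ≤
      (1 - (1 / 2) ^ (#A + #B)) ^ #H * Fintype.card (α → α → Bool) := by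
  choose! τ hτ using fun h (hh : h ∈ H) => exists_beats_and_beats_iff hAB (disjoint_right.1 hH hh)
  set T : α → Finset (α × α) := fun h => (A ∪ B).image fun a => (min a h, max a h)
  have hT : (H : Set α).PairwiseDisjoint T := by
    intro g hg h hh hne
    refine disjoint_left.2 fun p hpg hph => hne ?_
    obtain ⟨a, ha, rfl⟩ := mem_image.1 hpg
    obtain ⟨b, hb, h_eq⟩ := mem_image.1 hph
    exact eq_of_min_eq_of_max_eq (disjoint_left.1 hH ha) (disjoint_left.1 hH hb) hg hh
      (congrArg Prod.fst h_eq).symm (congrArg Prod.snd h_eq).symm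
  have hcard : ∀ h ∈ H, #(T h) ≤ #A + #B := fun h _ => card_image_le.trans (card_union_le A B)
  rw [← Fintype.card_congr (Equiv.curry α α Bool)]
  refine le_trans ?_ (card_filter_forall_exists_ne_le T τ H hT hcard)
  norm_cast
  refine card_le_card_of_injOn Function.uncurry (fun ω hω => ?_)
    fun _ _ _ _ h_eq => Function.uncurry_injective h_eq
  simp only [coe_filter, mem_univ, true_and, Set.mem_ofPred_eq] at hω ⊢
  intro h hh
  by_contra! h_eq
  exact hω h hh ((hτ h hh ω).2 h_eq)

end Tournaments

section Diagrams

variable {n : ℕ} {C : ChordDiagram n} {D : OrientedChordDiagram n} {a b x y : Fin (2 * n)}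
  {A B X Y : Finset (Fin (2 * n))}

lemma sum_chordDiagram_eq_sum_matchings {M : Type*} [AddCommMonoid M]
    (φ : (Fin (2 * n) → Fin (2 * n)) → M) :
    ∑ C : ChordDiagram n, φ C.1 = ∑ f ∈ matchings univ, φ f :=
  (sum_subtype _ (fun f => by simp [mem_matchings, Function.Involutive]) φ).symm

lemma card_chordDiagram : Fintype.card (ChordDiagram n) = Nat.doubleFactorial (2 * n - 1) := by
  rw [← card_matchings (card_fin (2 * n)), ← card_univ, card_eq_sum_ones, card_eq_sum_ones]
  exact sum_chordDiagram_eq_sum_matchings fun _ => 1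

lemma card_orientedChordDiagram_pos : 0 < #(univ : Finset (OrientedChordDiagram n)) := by
  rw [card_univ, Fintype.card_prod, card_chordDiagram]
  exact Nat.mul_pos (Nat.doubleFactorial_pos _) Fintype.card_pos

lemma chordRep_partner (C : ChordDiagram n) (x : Fin (2 * n)) :
    chordRep C (C.1 x) = chordRep C x := by
  rw [chordRep, C.2.1, min_comm, chordRep]

lemma chordRep_eq_or (C : ChordDiagram n) (x : Fin (2 * n)) :
    chordRep C x = x ∨ chordRep C x = C.1 x :=
  min_choice x (C.1 x)

lemma eq_or_eq_partner_of_chordRep_eq (h : chordRep C x = chordRep C y) :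
    y = x ∨ y = C.1 x := by
  rcases chordRep_eq_or C x with hx | hx <;> rcases chordRep_eq_or C y with hy | hy <;>
    rw [hx, hy] at h
  · exact .inl h.symm
  · exact .inr (by rw [h, C.2.1])
  · exact .inr h.symm
  · exact .inl (by rw [← C.2.1 y, ← h, C.2.1])

lemma crosses_iff_not_iff :
    Crosses C x y ↔ ¬ (Between x (C.1 x) y ↔ Between x (C.1 x) (C.1 y)) :=
  xor_iff_not_iff _ _

lemma Crosses.chordRep_ne (h : Crosses C x y) : chordRep C x ≠ chordRep C y := fun h_eq => by
  have not_between_left : ∀ z w : Fin (2 * n), ¬ Between z w z := by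
    simp +contextual [Between, le_of_lt]
  have not_between_right : ∀ z w : Fin (2 * n), ¬ Between z w w := by
    simp +contextual [Between, le_of_lt]
  rcases eq_or_eq_partner_of_chordRep_eq h_eq with rfl | rfl <;>
    simp [crosses_iff_not_iff, C.2.1, not_between_left, not_between_right] at h

/-- The chords of `C` with one endpoint in `X` and the other in `Y`, each represented by its
smaller endpoint. -/
def joiningChords (C : ChordDiagram n) (X Y : Finset (Fin (2 * n))) : Finset (Fin (2 * n)) :=
  {x ∈ X | C.1 x ∈ Y}.image (chordRep C)

lemma card_joiningChords (hXY : Disjoint X Y) :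
    #(joiningChords C X Y) = #{x ∈ X | C.1 x ∈ Y} := by
  refine card_image_of_injOn fun x hx y hy h => ?_
  rw [mem_coe, mem_filter] at hx hy
  exact ((eq_or_eq_partner_of_chordRep_eq h).resolve_right fun h_eq =>
    disjoint_left.1 hXY hy.1 (h_eq ▸ hx.2)).symm

/-- No chord of `D` joining `X` to `Y` is beaten by all of `A` and beats all of `B`, although `A`
and `B` (sets of smaller endpoints of chords) are disjoint from each other and contain no such
chord. Whether the chords actually cross is ignored, so that the coins alone decide. -/
def Unlinked (D : OrientedChordDiagram n) (A B X Y : Finset (Fin (2 * n))) : Prop :=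
  Disjoint A B ∧ Disjoint (A ∪ B) (joiningChords D.1 X Y) ∧
    ∀ h ∈ joiningChords D.1 X Y, ¬ ((∀ a ∈ A, Beats D.2 a h) ∧ ∀ b ∈ B, Beats D.2 h b)

lemma card_filter_unlinked_le (C : ChordDiagram n) (hXY : Disjoint X Y) :
    (#{ω : Fin (2 * n) → Fin (2 * n) → Bool | Unlinked (C, ω) A B X Y} : ℝ) ≤
      (1 - (1 / 2) ^ (#A + #B)) ^ #{x ∈ X | C.1 x ∈ Y} *
        Fintype.card (Fin (2 * n) → Fin (2 * n) → Bool) := by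
  rw [← card_joiningChords hXY]
  by_cases h : Disjoint A B ∧ Disjoint (A ∪ B) (joiningChords C X Y)
  · simpa [Unlinked, h] using card_filter_forall_not_beats_le h.1 h.2
  · have hempty : ∀ ω, ¬ Unlinked (C, ω) A B X Y := fun ω hω => h ⟨hω.1, hω.2.1⟩
    have hr : (0 : ℝ) ≤ 1 - (1 / 2) ^ (#A + #B) :=
      sub_nonneg.2 (pow_le_one₀ (by norm_num) (by norm_num))
    simp only [hempty, filter_false, card_empty, Nat.cast_zero]
    positivity

lemma probD_unlinked_le {δ : ℝ} (hδ : 0 ≤ δ) {t : ℕ} (hXY : Disjoint X Y) (hX : 2 * t ≤ #X)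
    (hY : δ * (2 * n) + t ≤ #Y) :
    probD n (fun D => Unlinked D A B X Y) ≤ (1 - δ * (1 / 2) ^ (#A + #B)) ^ t := by
  set r : ℝ := 1 - (1 / 2) ^ (#A + #B)
  have hr₀ : 0 ≤ r := sub_nonneg.2 (pow_le_one₀ (by norm_num) (by norm_num))
  have hr₁ : r ≤ 1 := sub_le_self _ (by positivity)
  set K : ℝ := ((Fintype.card (Fin (2 * n) → Fin (2 * n) → Bool) : ℕ) : ℝ)
  rw [probD, div_le_iff₀ (mod_cast card_orientedChordDiagram_pos)]
  calc (#{D : OrientedChordDiagram n | Unlinked D A B X Y} : ℝ)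
      = ∑ C : ChordDiagram n, (#{ω | Unlinked (C, ω) A B X Y} : ℝ) := by
        simp only [card_filter, Fintype.sum_prod_type, Nat.cast_sum]
    _ ≤ ∑ C : ChordDiagram n, r ^ #{x ∈ X | C.1 x ∈ Y} * K :=
        sum_le_sum fun C _ => card_filter_unlinked_le C hXY
    _ = (∑ f ∈ matchings univ, r ^ #{x ∈ X | f x ∈ Y}) * K := by
        rw [← sum_mul, sum_chordDiagram_eq_sum_matchings fun f => r ^ #{x ∈ X | f x ∈ Y}]
    _ ≤ (1 - δ * (1 - r)) ^ t * Nat.doubleFactorial (2 * n - 1) * K := by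
        gcongr
        exact sum_matchings_pow_card_le hr₀ hr₁ hδ t (card_fin _) (subset_univ X) (subset_univ Y)
          hXY hX hY
    _ = (1 - δ * (1 / 2) ^ (#A + #B)) ^ t * #(univ : Finset (OrientedChordDiagram n)) := by
        rw [card_univ, Fintype.card_prod, card_chordDiagram, sub_sub_cancel]
        push_cast
        ring

lemma probD_le_one (E : OrientedChordDiagram n → Prop) : probD n E ≤ 1 :=
  div_le_one_of_le₀ (mod_cast card_filter_le univ E) (by positivity)

lemma probD_mono {E F : OrientedChordDiagram n → Prop} (h : ∀ D, E D → F D) :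
    probD n E ≤ probD n F := by
  rw [probD, probD]
  gcongr with D
  exact h D

lemma one_sub_probD_le_probD {E F : OrientedChordDiagram n → Prop} (h : ∀ D, ¬ F D → E D) :
    1 - probD n F ≤ probD n E := by
  have hcard : #(univ : Finset (OrientedChordDiagram n)) ≤ #{D | F D} + #{D | E D} := by
    rw [← card_filter_add_card_filter_not F]
    gcongr with D
    exact h D
  rw [sub_le_iff_le_add', probD, probD, ← add_div,
    le_div_iff₀ (mod_cast card_orientedChordDiagram_pos), one_mul]
  exact_mod_cast hcard

lemma probD_exists_mem_le {ι : Type*} (s : Finset ι) {E : ι → OrientedChordDiagram n → Prop}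
    {b : ℝ} (h : ∀ i ∈ s, probD n (E i) ≤ b) : probD n (fun D => ∃ i ∈ s, E i D) ≤ #s * b := by
  calc probD n (fun D => ∃ i ∈ s, E i D) ≤ ∑ i ∈ s, probD n (E i) := by
        simp only [probD, ← sum_div]
        gcongr
        exact_mod_cast (card_le_card fun D hD => by simpa using hD).trans (card_biUnion_le (s := s))
    _ ≤ #s * b := (sum_le_card_nsmul _ _ _ h).trans_eq (nsmul_eq_mul _ _)

lemma overD_congr_left (h : chordRep D.1 a = chordRep D.1 b) : OverD D a x ↔ OverD D b x := by
  rw [OverD, OverD, h]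
  rcases eq_or_eq_partner_of_chordRep_eq h with rfl | rfl
  · rfl
  · simp only [Crosses, Between, D.1.2.1, min_comm, max_comm]

lemma exists_overD_of_not_unlinked
    (hAB : Disjoint (A.image (chordRep D.1)) (B.image (chordRep D.1)))
    (hX : ∀ x ∈ X, D.1.1 x ∈ Y → (∀ a ∈ A, Crosses D.1 a x) ∧ ∀ b ∈ B, Crosses D.1 x b)
    (h : ¬ Unlinked D (A.image (chordRep D.1)) (B.image (chordRep D.1)) X Y) :
    ∃ x ∈ X, D.1.1 x ∈ Y ∧ (∀ a ∈ A, OverD D a x) ∧ ∀ b ∈ B, OverD D x b := by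
  have hdisj : Disjoint (A.image (chordRep D.1) ∪ B.image (chordRep D.1))
      (joiningChords D.1 X Y) := by
    rw [disjoint_union_left, disjoint_left, disjoint_left]
    simp only [Finset.forall_mem_image]
    simp only [joiningChords, mem_image, mem_filter, not_exists, not_and, and_imp]
    exact ⟨fun a ha x hxX hxY => ((hX x hxX hxY).1 a ha).chordRep_ne.symm,
      fun b hb x hxX hxY => ((hX x hxX hxY).2 b hb).chordRep_ne⟩
  rw [Unlinked, not_and, not_and] at h
  obtain ⟨x, hxX, hxY, hAx, hxB⟩ : ∃ x ∈ X, D.1.1 x ∈ Y ∧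
      (∀ a ∈ A, Beats D.2 (chordRep D.1 a) (chordRep D.1 x)) ∧
      ∀ b ∈ B, Beats D.2 (chordRep D.1 x) (chordRep D.1 b) := by
    simpa only [joiningChords, forall_mem_image, mem_filter, and_imp, not_forall, not_not,
      exists_prop] using h hAB hdisj
  obtain ⟨hcA, hcB⟩ := hX x hxX hxY
  exact ⟨x, hxX, hxY, fun a ha => ⟨hcA a ha, hAx a ha⟩, fun b hb => ⟨hcB b hb, hxB b hb⟩⟩

end Diagrams

section Blocks

/-- The number of points on the shorter of the two open arcs between `p` and `q`, for `N` points
`0, …, N - 1` on a circle. -/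
def arcLength (N p q : ℕ) : ℕ :=
  min (max p q - min p q - 1) (N - (max p q - min p q) - 1)

/-- The chord from `lo` to `hi > lo` separates `p` from `q`. -/
def Separates (lo hi p q : ℕ) : Prop :=
  Xor (lo < p ∧ p < hi) (lo < q ∧ q < hi)

/-- The blocks `[i, i + m)` and `[j, j + s)` are disjoint and lie in `[0, N)`. -/
def DisjointBlocks (N m s i j : ℕ) : Prop :=
  i + m ≤ N ∧ j + s ≤ N ∧ (i + m ≤ j ∨ j + s ≤ i)

variable {n k m s lo hi lo' hi' : ℕ}

-- The small block fits into the shorter arc, unless the point `0` splits that arc into two parts;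
-- then it fits into the larger of them, as `2 * m ≤ k`.
lemma exists_blocks_separates (hmk : 2 * m ≤ k) (hks : k ≤ s) (hsn : 100 * s ≤ n) (hlt : lo < hi)
    (hhi : hi < 2 * n) (hk : k ≤ arcLength (2 * n) lo hi) :
    ∃ i j, DisjointBlocks (2 * n) m s i j ∧ ∀ p ∈ Ico i (i + m), ∀ q ∈ Ico j (j + s),
      Separates lo hi p q ∧ 16 * s ≤ arcLength (2 * n) p q := by
  simp only [arcLength, Separates, DisjointBlocks, Xor, mem_Ico] at *
  by_cases h_long : n ≤ hi - lo
  · by_cases h_room : m ≤ lo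
    · exact ⟨0, lo + 1 + 17 * s, by omega, fun p _ q _ => by omega⟩
    · exact ⟨hi + 1, lo + 1 + 17 * s, by omega, fun p _ q _ => by omega⟩
  · by_cases h_room : 35 * s ≤ lo
    · exact ⟨lo + 1, 17 * s, by omega, fun p _ q _ => by omega⟩
    · exact ⟨lo + 1, hi + 1 + 17 * s, by omega, fun p _ q _ => by omega⟩

lemma exists_blocks_separates_separates (hms : m ≤ s) (hks : k ≤ s) (hsn : 100 * s ≤ n)
    (hlt : lo < hi) (hhi : hi < 2 * n) (hlen : 16 * s ≤ arcLength (2 * n) lo hi)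
    (hlt' : lo' < hi') (hhi' : hi' < 2 * n) (hlen' : 16 * s ≤ arcLength (2 * n) lo' hi')
    (hlo : lo ≤ lo') :
    ∃ i j, DisjointBlocks (2 * n) m s i j ∧ ∀ p ∈ Ico i (i + m), ∀ q ∈ Ico j (j + s),
      Separates lo hi p q ∧ Separates lo' hi' p q ∧ k ≤ arcLength (2 * n) p q := by
  simp only [arcLength, Separates, DisjointBlocks, Xor, mem_Ico] at *
  by_cases h_apart : hi < lo'
  · exact ⟨lo + 1, lo' + 1, by omega, fun p _ q _ => by omega⟩
  by_cases h_nested : hi' < hi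
  · by_cases h_room : 8 * s ≤ lo
    · exact ⟨0, lo' + 1, by omega, fun p _ q _ => by omega⟩
    · exact ⟨lo' + 1, hi + 1, by omega, fun p _ q _ => by omega⟩
  by_cases h_staggered : 7 * s ≤ lo' - lo ∧ 7 * s ≤ hi' - hi
  · exact ⟨lo + 1, hi + 1, by omega, fun p _ q _ => by omega⟩
  · by_cases h_room : 3 * s ≤ lo
    · exact ⟨0, lo' + 1, by omega, fun p _ q _ => by omega⟩
    · exact ⟨lo' + 1, hi' + 1, by omega, fun p _ q _ => by omega⟩

end Blocks

section WellLinked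

variable {n k m s : ℕ} {C : ChordDiagram n} {D : OrientedChordDiagram n} {a b c d : Fin (2 * n)}

/-- The points of `Fin N` in the interval `[i, i + m)`, as the blocks of `DisjointBlocks`. -/
def block (N i m : ℕ) : Finset (Fin N) :=
  {x | (x : ℕ) ∈ Ico i (i + m)}

lemma mem_block {N i : ℕ} {x : Fin N} : x ∈ block N i m ↔ (x : ℕ) ∈ Ico i (i + m) :=
  mem_filter_univ x

lemma card_block {N i : ℕ} (h : i + m ≤ N) : #(block N i m) = m := by
  have h_eq : (block N i m).map Fin.valEmbedding = Ico i (i + m) := by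
    ext p
    simp only [Finset.mem_map, mem_block, Fin.valEmbedding_apply]
    exact ⟨by rintro ⟨x, hx, rfl⟩; exact hx,
      fun hp => ⟨⟨p, (mem_Ico.1 hp).2.trans_le h⟩, hp, rfl⟩⟩
  rw [← card_map, h_eq, Nat.card_Ico, Nat.add_sub_cancel_left]

lemma DisjointBlocks.disjoint {N i j : ℕ} (h : DisjointBlocks N m s i j) :
    Disjoint (block N i m) (block N j s) := by
  refine disjoint_left.2 fun x hi hj => ?_
  rw [mem_block, mem_Ico] at hi hj
  have := h.2.2
  omega

/-- Any at most one chord `A` and at most one other chord `B` (given by their smaller endpoints)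
are linked by a chord between any two disjoint blocks of `m` and `s` points. -/
def WellLinked (D : OrientedChordDiagram n) (m s : ℕ) : Prop :=
  ∀ A B : Finset (Fin (2 * n)), #A ≤ 1 → #B ≤ 1 → ∀ i j, DisjointBlocks (2 * n) m s i j →
    ¬ Unlinked D A B (block (2 * n) i m) (block (2 * n) j s)

lemma Crosses.symm (h : Crosses C a b) : Crosses C b a := by
  have hne : chordRep C a ≠ chordRep C b := h.chordRep_ne
  have h₁ : a ≠ b := ne_of_apply_ne _ hne
  have h₂ : C.1 a ≠ b := ne_of_apply_ne (chordRep C) (by rwa [chordRep_partner])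
  have h₃ : a ≠ C.1 b := ne_of_apply_ne (chordRep C) (by rwa [chordRep_partner])
  have h₄ : C.1 a ≠ C.1 b := ne_of_apply_ne (chordRep C) (by simpa only [chordRep_partner])
  rw [crosses_iff_not_iff] at *
  simp only [Between, lt_max_iff, min_lt_iff] at *
  omega

lemma chordLength_eq_arcLength :
    chordLength C a = arcLength (2 * n) (min (a : ℕ) (C.1 a)) (max (a : ℕ) (C.1 a)) := by
  simp [chordLength, arcLength]

lemma min_lt_max_partner (C : ChordDiagram n) (a : Fin (2 * n)) :
    min (a : ℕ) (C.1 a) < max (a : ℕ) (C.1 a) :=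
  min_lt_max.2 fun h => C.2.2 a (Fin.ext h.symm)

lemma exists_blocks_crosses (hmk : 2 * m ≤ k) (hks : k ≤ s) (hsn : 100 * s ≤ n)
    (hk : k ≤ chordLength C c) :
    ∃ i j, DisjointBlocks (2 * n) m s i j ∧ ∀ x ∈ block (2 * n) i m, C.1 x ∈ block (2 * n) j s →
      Crosses C c x ∧ 16 * s ≤ chordLength C x := by
  obtain ⟨i, j, hij, h⟩ := exists_blocks_separates hmk hks hsn (min_lt_max_partner C c)
    (max_lt c.2 (C.1 c).2) (chordLength_eq_arcLength ▸ hk)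
  exact ⟨i, j, hij, fun x hi hj => h x (mem_block.1 hi) (C.1 x) (mem_block.1 hj)⟩

lemma exists_blocks_crosses_crosses (hms : m ≤ s) (hks : k ≤ s) (hsn : 100 * s ≤ n)
    (ha : 16 * s ≤ chordLength C a) (hb : 16 * s ≤ chordLength C b) :
    ∃ i j, DisjointBlocks (2 * n) m s i j ∧ ∀ x ∈ block (2 * n) i m, C.1 x ∈ block (2 * n) j s →
      Crosses C a x ∧ Crosses C b x ∧ k ≤ chordLength C x := by
  wlog hlo : min (a : ℕ) (C.1 a) ≤ min (b : ℕ) (C.1 b) generalizing a b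
  · simpa only [and_left_comm] using this hb ha (not_le.1 hlo).le
  obtain ⟨i, j, hij, h⟩ := exists_blocks_separates_separates hms hks hsn
    (min_lt_max_partner C a) (max_lt a.2 (C.1 a).2) (chordLength_eq_arcLength ▸ ha)
    (min_lt_max_partner C b) (max_lt b.2 (C.1 b).2) (chordLength_eq_arcLength ▸ hb) hlo
  exact ⟨i, j, hij, fun x hi hj => h x (mem_block.1 hi) (C.1 x) (mem_block.1 hj)⟩

lemma WellLinked.exists_overD_left (hD : WellLinked D m s) (hmk : 2 * m ≤ k) (hks : k ≤ s)
    (hsn : 100 * s ≤ n) (hk : k ≤ chordLength D.1 c) :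
    ∃ a, OverD D c a ∧ 16 * s ≤ chordLength D.1 a := by
  obtain ⟨i, j, hij, h⟩ := exists_blocks_crosses hmk hks hsn hk
  obtain ⟨a, hai, haj, hca, -⟩ := exists_overD_of_not_unlinked (A := {c}) (B := ∅) (by simp)
    (by simpa using fun x hi hj => (h x hi hj).1) (hD _ _ (by simp) (by simp) i j hij)
  exact ⟨a, hca c (mem_singleton_self c), (h a hai haj).2⟩

lemma WellLinked.exists_overD_right (hD : WellLinked D m s) (hmk : 2 * m ≤ k) (hks : k ≤ s)
    (hsn : 100 * s ≤ n) (hk : k ≤ chordLength D.1 d) :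
    ∃ b, OverD D b d ∧ 16 * s ≤ chordLength D.1 b := by
  obtain ⟨i, j, hij, h⟩ := exists_blocks_crosses hmk hks hsn hk
  obtain ⟨b, hbi, hbj, -, hbd⟩ := exists_overD_of_not_unlinked (A := ∅) (B := {d}) (by simp)
    (by simpa using fun x hi hj => (h x hi hj).1.symm) (hD _ _ (by simp) (by simp) i j hij)
  exact ⟨b, hbd d (mem_singleton_self d), (h b hbi hbj).2⟩

lemma WellLinked.exists_overD_overD (hD : WellLinked D m s) (hms : m ≤ s) (hks : k ≤ s)
    (hsn : 100 * s ≤ n) (ha : 16 * s ≤ chordLength D.1 a) (hb : 16 * s ≤ chordLength D.1 b)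
    (hab : chordRep D.1 a ≠ chordRep D.1 b) :
    ∃ x, OverD D a x ∧ OverD D x b ∧ k ≤ chordLength D.1 x := by
  obtain ⟨i, j, hij, h⟩ := exists_blocks_crosses_crosses hms hks hsn ha hb
  obtain ⟨x, hxi, hxj, hax, hxb⟩ := exists_overD_of_not_unlinked (A := {a}) (B := {b})
    (by simpa using hab) (by simpa using fun x hi hj => ⟨(h x hi hj).1, (h x hi hj).2.1.symm⟩)
    (hD _ _ (by simp) (by simp) i j hij)
  exact ⟨x, hax a (mem_singleton_self a), hxb b (mem_singleton_self b), (h x hxi hxj).2.2⟩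

lemma WellLinked.stronglyConnectedIn (hD : WellLinked D m s) (hmk : 2 * m ≤ k) (hks : k ≤ s)
    (hsn : 100 * s ≤ n) : StronglyConnectedIn D {x | k ≤ chordLength D.1 x} := by
  intro c hc d hd
  obtain ⟨a, hca, ha⟩ := hD.exists_overD_left hmk hks hsn hc
  obtain ⟨b, hbd, hb⟩ := hD.exists_overD_right hmk hks hsn hd
  have hak : k ≤ chordLength D.1 a := by omega
  have hbk : k ≤ chordLength D.1 b := by omega
  have hpath : Relation.ReflTransGen (fun u v => u ∈ {x | k ≤ chordLength D.1 x} ∧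
      v ∈ {x | k ≤ chordLength D.1 x} ∧ OverD D u v) c a := .single ⟨hc, hak, hca⟩
  by_cases hab : chordRep D.1 a = chordRep D.1 b
  · exact hpath.tail ⟨hak, hd, (overD_congr_left hab).2 hbd⟩
  · obtain ⟨x, hax, hxb, hx⟩ := hD.exists_overD_overD (by omega) hks hsn ha hb hab
    exact ((hpath.tail ⟨hak, hx, hax⟩).tail ⟨hx, hbk, hxb⟩).tail ⟨hbk, hd, hbd⟩

end WellLinked

section Probability

variable {n t s : ℕ} {δ : ℝ}

lemma card_filter_card_le_one_le {α : Type*} [Fintype α] :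
    #{A : Finset α | #A ≤ 1} ≤ Fintype.card α + 1 := by
  calc #{A : Finset α | #A ≤ 1} ≤ #(insert ∅ (univ.image singleton : Finset (Finset α))) := by
        refine card_le_card fun A hA => ?_
        rw [mem_filter_univ, Nat.le_one_iff_eq_zero_or_eq_one, card_eq_zero, card_eq_one] at hA
        rcases hA with rfl | ⟨x, rfl⟩ <;> simp
    _ ≤ Fintype.card α + 1 := (card_insert_le _ _).trans (by gcongr; exact card_image_le)

lemma probD_unlinked_block_le {A B : Finset (Fin (2 * n))} {i j : ℕ} (hA : #A ≤ 1) (hB : #B ≤ 1)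
    (hδ₀ : 0 ≤ δ) (hδ₁ : δ ≤ 1) (hs : δ * (2 * n) + t ≤ s)
    (hij : DisjointBlocks (2 * n) (2 * t) s i j) :
    probD n (fun D => Unlinked D A B (block (2 * n) i (2 * t)) (block (2 * n) j s)) ≤
      (1 - δ / 4) ^ t := by
  have hquarter : (1 / 4 : ℝ) ≤ (1 / 2) ^ (#A + #B) := by
    calc (1 / 4 : ℝ) = (1 / 2) ^ 2 := by norm_num
      _ ≤ (1 / 2) ^ (#A + #B) :=
        pow_le_pow_of_le_one (by norm_num) (by norm_num) (by omega)
  have hle_one : δ * (1 / 2) ^ (#A + #B) ≤ 1 :=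
    mul_le_one₀ hδ₁ (by positivity) (pow_le_one₀ (by norm_num) (by norm_num))
  refine (probD_unlinked_le hδ₀ hij.disjoint (card_block hij.1).ge
    (by rwa [card_block hij.2.1])).trans (pow_le_pow_left₀ (sub_nonneg.2 hle_one) ?_ t)
  nlinarith

lemma one_sub_le_probD_wellLinked (hδ₀ : 0 ≤ δ) (hδ₁ : δ ≤ 1) (hs : δ * (2 * n) + t ≤ s) :
    1 - (2 * n + 1) ^ 4 * (1 - δ / 4) ^ t ≤ probD n (fun D => WellLinked D (2 * t) s) := by
  set S : Finset (Finset (Fin (2 * n))) := {A | #A ≤ 1}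
  set P : Finset (ℕ × ℕ) :=
    {p ∈ range (2 * n + 1) ×ˢ range (2 * n + 1) | DisjointBlocks (2 * n) (2 * t) s p.1 p.2}
  let E (u : Finset (Fin (2 * n)) × Finset (Fin (2 * n)) × ℕ × ℕ)
      (D : OrientedChordDiagram n) : Prop :=
    Unlinked D u.1 u.2.1 (block (2 * n) u.2.2.1 (2 * t)) (block (2 * n) u.2.2.2 s)
  have hcard : #(S ×ˢ S ×ˢ P) ≤ (2 * n + 1) ^ 4 := by
    have hS : #S ≤ 2 * n + 1 := by simpa using card_filter_card_le_one_le (α := Fin (2 * n))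
    have hP : #P ≤ (2 * n + 1) * (2 * n + 1) := by
      simpa using card_filter_le (range (2 * n + 1) ×ˢ range (2 * n + 1)) _
    calc #(S ×ˢ S ×ˢ P) = #S * (#S * #P) := by rw [card_product, card_product]
      _ ≤ (2 * n + 1) * ((2 * n + 1) * ((2 * n + 1) * (2 * n + 1))) := by gcongr
      _ = (2 * n + 1) ^ 4 := by ring
  have hE : ∀ u ∈ S ×ˢ S ×ˢ P, probD n (E u) ≤ (1 - δ / 4) ^ t := fun u hu => by
    simp only [S, P, mem_product, mem_filter, mem_univ, true_and] at hu
    exact probD_unlinked_block_le hu.1 hu.2.1 hδ₀ hδ₁ hs hu.2.2.2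
  have hlinked : ∀ D, ¬ (∃ u ∈ S ×ˢ S ×ˢ P, E u D) → WellLinked D (2 * t) s :=
    fun D hD A B hA hB i j hij hAB => by
      have hi : i < 2 * n + 1 := by have := hij.1; omega
      have hj : j < 2 * n + 1 := by have := hij.2.1; omega
      exact hD ⟨(A, B, i, j), by simp [S, P, hA, hB, hi, hj, hij], hAB⟩
  calc 1 - (2 * n + 1) ^ 4 * (1 - δ / 4) ^ t ≤ 1 - #(S ×ˢ S ×ˢ P) * (1 - δ / 4) ^ t := by
        have hq : 0 ≤ 1 - δ / 4 := by linarith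
        gcongr
        exact_mod_cast hcard
    _ ≤ 1 - probD n (fun D => ∃ u ∈ S ×ˢ S ×ˢ P, E u D) :=
        sub_le_sub_left (probD_exists_mem_le _ hE) 1
    _ ≤ probD n (fun D => WellLinked D (2 * t) s) := one_sub_probD_le_probD hlinked

end Probability

section Asymptotics

open Asymptotics

variable {k : ℕ → ℕ}

lemma tendsto_atTop_of_log_isLittleO
    (hlog : (fun n : ℕ => Real.log n) =o[atTop] fun n => (k n : ℝ)) : Tendsto k atTop atTop := by
  have hlog_top : Tendsto (fun n : ℕ => ‖Real.log n‖) atTop atTop :=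
    tendsto_norm_atTop_atTop.comp (Real.tendsto_log_atTop.comp tendsto_natCast_atTop_atTop)
  simpa [tendsto_natCast_atTop_iff] using hlog.isBigO.trans_tendsto_norm_atTop hlog_top

lemma isBigO_natCast_div {ι : Type*} {l : Filter ι} {f : ι → ℕ} (hf : Tendsto f l atTop) {d : ℕ}
    (hd : 0 < d) : (fun i => (f i : ℝ)) =O[l] fun i => ((f i / d : ℕ) : ℝ) := by
  refine .of_bound (2 * d) ?_
  filter_upwards [hf.eventually_ge_atTop d] with i hi
  have hquot : 1 ≤ f i / d := (Nat.one_le_div_iff hd).2 hi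
  have hle : f i ≤ 2 * d * (f i / d) := by
    nlinarith [Nat.lt_mul_div_succ (f i) hd]
  simpa using (by exact_mod_cast hle : (f i : ℝ) ≤ 2 * d * (f i / d : ℕ))

lemma eventually_pow_le_inv_pow
    (hlog : (fun n : ℕ => Real.log n) =o[atTop] fun n => (k n : ℝ)) {q : ℝ} (hq₀ : 0 < q)
    (hq₁ : q < 1) (d : ℕ) : ∀ᶠ n : ℕ in atTop, q ^ k n ≤ ((n : ℝ) ^ d)⁻¹ := by
  have hlogq : Real.log q < 0 := Real.log_neg hq₀ hq₁
  have hsmall := ((hlog.const_mul_left (d : ℝ)).def (neg_pos.2 hlogq))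
  filter_upwards [hsmall, eventually_gt_atTop 0] with n hn hn₀
  rw [← Real.log_le_log_iff (by positivity) (by positivity), Real.log_inv, Real.log_pow,
    Real.log_pow]
  have := (le_abs_self _).trans hn
  rw [Real.norm_natCast] at this
  linarith

lemma tendsto_pow_mul_pow
    (hlog : (fun n : ℕ => Real.log n) =o[atTop] fun n => (k n : ℝ)) {q : ℝ} (hq₀ : 0 < q)
    (hq₁ : q < 1) (d : ℕ) :
    Tendsto (fun n : ℕ => (2 * n + 1 : ℝ) ^ d * q ^ k n) atTop (nhds 0) := by
  have hbound : Tendsto (fun n : ℕ => (3 : ℝ) ^ d * (n : ℝ)⁻¹) atTop (nhds 0) := by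
    simpa using tendsto_inv_atTop_nhds_zero_nat.const_mul ((3 : ℝ) ^ d)
  refine squeeze_zero' (.of_forall fun n => by positivity) ?_ hbound
  filter_upwards [eventually_pow_le_inv_pow hlog hq₀ hq₁ (d + 1), eventually_gt_atTop 0]
    with n hn hn₀
  have hn₁ : (1 : ℝ) ≤ n := mod_cast hn₀
  calc (2 * n + 1 : ℝ) ^ d * q ^ k n ≤ (3 * n) ^ d * ((n : ℝ) ^ (d + 1))⁻¹ := by
        gcongr
        linarith
    _ = 3 ^ d * (n : ℝ)⁻¹ := by
        rw [mul_pow, pow_succ]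
        field_simp

lemma eventually_le_div
    (hk : (fun n => (k n : ℝ)) =o[atTop] fun n => (n : ℝ)) : ∀ᶠ n in atTop, k n ≤ n / 100 := by
  filter_upwards [hk.def (by norm_num : (0 : ℝ) < 1 / 100)] with n hn
  rw [Nat.le_div_iff_mul_le (by norm_num)]
  have h : (k n : ℝ) * 100 ≤ n := by
    simp only [Real.norm_natCast] at hn
    linarith
  exact_mod_cast h

lemma isEquivalent_natFloor_rpow {r : ℝ} (hr : 0 < r) :
    (fun n : ℕ => (⌊(n : ℝ) ^ r⌋₊ : ℝ)) ~[atTop] fun n : ℕ => (n : ℝ) ^ r :=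
  isEquivalent_nat_floor.comp_tendsto ((tendsto_rpow_atTop hr).comp tendsto_natCast_atTop_atTop)

lemma log_isLittleO_natFloor_rpow {r : ℝ} (hr : 0 < r) :
    (fun n : ℕ => Real.log n) =o[atTop] fun n : ℕ => (⌊(n : ℝ) ^ r⌋₊ : ℝ) :=
  ((isLittleO_log_rpow_atTop hr).comp_tendsto tendsto_natCast_atTop_atTop).trans_isEquivalent
    (isEquivalent_natFloor_rpow hr).symm

lemma natFloor_rpow_isLittleO {r : ℝ} (hr₀ : 0 < r) (hr₁ : r < 1) :
    (fun n : ℕ => (⌊(n : ℝ) ^ r⌋₊ : ℝ)) =o[atTop] fun n : ℕ => (n : ℝ) := by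
  have h : (fun x : ℝ => x ^ r) =o[atTop] fun x => x := by
    refine (isLittleO_iff_tendsto' ?_).2 ?_
    · filter_upwards [eventually_ne_atTop 0] with x hx h₀ using absurd h₀ hx
    · refine (tendsto_rpow_neg_atTop (sub_pos.2 hr₁)).congr' ?_
      filter_upwards [eventually_gt_atTop 0] with x hx
      rw [neg_sub, Real.rpow_sub_one hx.ne']
  exact (isEquivalent_natFloor_rpow hr₀).trans_isLittleO
    (h.comp_tendsto tendsto_natCast_atTop_atTop)

theorem stmt12_general
    (hlog : (fun n : ℕ => Real.log n) =o[atTop] fun n => (k n : ℝ))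
    (hk : (fun n => (k n : ℝ)) =o[atTop] fun n => (n : ℝ)) :
    Tendsto
      (fun n => probD n fun D => StronglyConnectedIn D {x | k n ≤ chordLength D.1 x})
      atTop (nhds 1) := by
  have hlog_div : (fun n : ℕ => Real.log n) =o[atTop] fun n => ((k n / 4 : ℕ) : ℝ) :=
    hlog.trans_isBigO (isBigO_natCast_div (tendsto_atTop_of_log_isLittleO hlog) (by norm_num))
  have hbound : Tendsto (fun n : ℕ => 1 - (2 * n + 1 : ℝ) ^ 4 * (1 - 1 / 1000 / 4) ^ (k n / 4))
      atTop (nhds 1) := by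
    simpa using (tendsto_pow_mul_pow hlog_div (q := 1 - 1 / 1000 / 4) (by norm_num) (by norm_num)
      4).const_sub 1
  refine tendsto_of_tendsto_of_tendsto_of_le_of_le' hbound tendsto_const_nhds ?_
    (.of_forall fun n => probD_le_one _)
  filter_upwards [eventually_le_div hk, eventually_ge_atTop 1000] with n hkn hn
  have hs : (1 / 1000 : ℝ) * (2 * n) + (k n / 4 : ℕ) ≤ (n / 100 : ℕ) := by
    have hle : (2 * n + 1000 * (k n / 4 : ℕ) : ℝ) ≤ 1000 * (n / 100 : ℕ) :=
      mod_cast (by omega : 2 * n + 1000 * (k n / 4) ≤ 1000 * (n / 100))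
    linarith
  refine (one_sub_le_probD_wellLinked (by norm_num) (by norm_num) hs).trans
    (probD_mono fun D hD => hD.stronglyConnectedIn (by omega) hkn (by omega))

end Asymptotics

theorem stmt12 :
    Filter.Tendsto
      (fun n : ℕ => probD n (fun D =>
        StronglyConnectedIn D {x | 3 * ⌊(n:ℝ) ^ ((1:ℝ)/3)⌋₊ ≤ chordLength D.1 x}))
      Filter.atTop (nhds 1) :=
  stmt12_general
    (by simpa using (log_isLittleO_natFloor_rpow (by norm_num)).const_mul_right three_ne_zero)
    (by simpa using (natFloor_rpow_isLittleO (by norm_num) (by norm_num)).const_mul_left 3)
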